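/- Let n ≥ 1, m ≥ 1, let D and A be n×n real matrices, B an n×m real matrix, let (λ_i)_{i∈ℕ} be a strictly increasing sequence of positive real numbers tending to +∞, and let k ≥ (n−1)² be an integer. Then the following are equivalent: (i) rank [λ_i·D − A | B] = n for every i; (ii) there exists R > 0 such that for every finitely supported sequence a : ℕ → ℝⁿ one has Σ_i ‖a_i‖² ≤ R · Σ_i λ_i^{2k} ‖([λ_i·D − A | B])ᵀ a_i‖². -/

import Mathlib

open Matrix

/-- The Kalman matrix `[M|B] = (M^{n-1}B | M^{n-2}B | ⋯ | MB | B)`. -/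
def kalman {n m : ℕ} (M : Matrix (Fin n) (Fin n) ℝ) (B : Matrix (Fin n) (Fin m) ℝ) :
    Matrix (Fin n) (Fin n × Fin m) ℝ :=
  fun i p => (M ^ (n - 1 - (p.1 : ℕ)) * B) i p.2

open Polynomial in
/-- The Kalman matrix with polynomial entries in the spectral parameter. -/
noncomputable def kalPoly {n m : ℕ} (D A : Matrix (Fin n) (Fin n) ℝ)
    (B : Matrix (Fin n) (Fin m) ℝ) : Matrix (Fin n) (Fin n × Fin m) (Polynomial ℝ) :=
  fun i p => (((X : ℝ[X]) • D.map C - A.map C) ^ (n - 1 - (p.1 : ℕ)) * B.map C) i p.2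

lemma kalPoly_eval {n m : ℕ} (D A : Matrix (Fin n) (Fin n) ℝ)
    (B : Matrix (Fin n) (Fin m) ℝ) (t : ℝ) :
    (kalPoly D A B).map (Polynomial.evalRingHom t) = kalman (t • D - A) B := by
  have h1 : (((Polynomial.X : Polynomial ℝ) • D.map Polynomial.C - A.map Polynomial.C).map
      (Polynomial.evalRingHom t)) = t • D - A := by
    ext i j
    simp
    ring
  have h2 : (B.map Polynomial.C).map (Polynomial.evalRingHom t) = B := by
    ext i j
    simp
  ext i p
  have := congrFun (congrFun (Matrix.map_mul (f := Polynomial.evalRingHom t)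
    (L := ((Polynomial.X : Polynomial ℝ) • D.map Polynomial.C - A.map Polynomial.C)
      ^ (n - 1 - (p.1 : ℕ))) (M := B.map Polynomial.C)) i) p.2
  rw [Matrix.map_pow, h1, h2] at this
  exact this

lemma natDegree_pow_entry {n : ℕ} (M : Matrix (Fin n) (Fin n) (Polynomial ℝ))
    (hM : ∀ i j, (M i j).natDegree ≤ 1) (e : ℕ) : ∀ i j, ((M ^ e) i j).natDegree ≤ e := by
  induction e with
  | zero =>
    intro i j
    rw [pow_zero, Matrix.one_apply]
    split_ifs <;> simp
  | succ e ih =>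
    intro i j
    rw [pow_succ, Matrix.mul_apply]
    refine Polynomial.natDegree_sum_le_of_forall_le _ _ fun x _ => ?_
    exact Polynomial.natDegree_mul_le.trans (add_le_add (ih i x) (hM x j))

lemma kalPoly_natDegree {n m : ℕ} (D A : Matrix (Fin n) (Fin n) ℝ)
    (B : Matrix (Fin n) (Fin m) ℝ) (i : Fin n) (p : Fin n × Fin m) :
    (kalPoly D A B i p).natDegree ≤ n - 1 := by
  unfold kalPoly
  rw [Matrix.mul_apply]
  refine Polynomial.natDegree_sum_le_of_forall_le _ _ fun x _ => ?_
  refine Polynomial.natDegree_mul_le.trans ?_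
  have h := natDegree_pow_entry
    ((Polynomial.X : Polynomial ℝ) • D.map Polynomial.C - A.map Polynomial.C) (by
      intro i j
      simp only [Matrix.sub_apply, Matrix.smul_apply, Matrix.map_apply, smul_eq_mul]
      compute_degree) (n - 1 - (p.1 : ℕ)) i x
  simp only [Matrix.map_apply, Polynomial.natDegree_C, add_zero]
  omega

lemma natDegree_det_le_mul {N d : ℕ} (Q : Matrix (Fin N) (Fin N) (Polynomial ℝ))
    (hQ : ∀ i j, (Q i j).natDegree ≤ d) : Q.det.natDegree ≤ N * d := by
  rw [Matrix.det_apply]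
  refine Polynomial.natDegree_sum_le_of_forall_le _ _ fun s _ => ?_
  refine (Polynomial.natDegree_smul_le _ _).trans ?_
  refine (Polynomial.natDegree_prod_le _ _).trans ?_
  refine (Finset.sum_le_sum fun i _ => hQ _ _).trans ?_
  simp

lemma natDegree_adjugate_le {n d : ℕ} (Q : Matrix (Fin n) (Fin n) (Polynomial ℝ))
    (hQ : ∀ i j, (Q i j).natDegree ≤ d) (i j : Fin n) :
    (Q.adjugate i j).natDegree ≤ (n - 1) * d := by
  cases n with
  | zero => exact i.elim0
  | succ N =>
    rw [Matrix.adjugate_fin_succ_eq_det_submatrix]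
    have h := natDegree_det_le_mul (Q.submatrix j.succAbove i.succAbove) (d := d)
      (fun _ _ => hQ _ _)
    refine Polynomial.natDegree_mul_le.trans ?_
    have h0 : ((-1 : Polynomial ℝ) ^ (j + i : ℕ)).natDegree = 0 := by
      rcases neg_one_pow_eq_or (Polynomial ℝ) (j + i : ℕ) with h | h <;> rw [h] <;> simp
    rw [h0]
    simpa using h

lemma exists_minor {n : ℕ} {ι : Type*} [Fintype ι] (K : Matrix (Fin n) ι ℝ) (h : K.rank = n) :
    ∃ f : Fin n → ι, (K.submatrix id f).det ≠ 0 := by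
  rw [Matrix.rank_eq_finrank_span_cols] at h
  have hex := Submodule.exists_fun_fin_finrank_span_eq ℝ (Set.range K.col)
  rw [h] at hex
  obtain ⟨g, hg, -, hli⟩ := hex
  choose f hf using hg
  refine ⟨f, ?_⟩
  have : (K.submatrix id f).col = g := by
    funext i
    rw [← hf]
    rfl
  rw [← this, Matrix.linearIndependent_cols_iff_isUnit, Matrix.isUnit_iff_isUnit_det] at hli
  exact hli.ne_zero

lemma key_ineq {n : ℕ} {ι : Type*} [Fintype ι] (K : Matrix (Fin n) ι ℝ) (f : Fin n → ι)
    (a : Fin n → ℝ) :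
    (K.submatrix id f).det ^ 2 * ∑ x, a x ^ 2 ≤
      (∑ x, ∑ y, ((K.submatrix id f).adjugate y x) ^ 2) *
        (n * ∑ y, (Kᵀ.mulVec a y) ^ 2) := by
  set Q := K.submatrix id f with hQ
  have h1 : ∀ x, Q.det * a x = ∑ y, Q.adjugate y x * (Kᵀ.mulVec a (f y)) := by
    intro x
    have h2 : Qᵀ.adjugate *ᵥ (Qᵀ *ᵥ a) = Q.det • a := by
      rw [Matrix.mulVec_mulVec, Matrix.adjugate_mul, Matrix.det_transpose, Matrix.smul_mulVec,
        Matrix.one_mulVec]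
    have h3 := congrFun h2 x
    rw [← Matrix.adjugate_transpose] at h3
    exact h3.symm
  rw [Finset.mul_sum, Finset.sum_mul]
  refine Finset.sum_le_sum fun x _ => ?_
  rw [← mul_pow, h1]
  refine (Finset.sum_mul_sq_le_sq_mul_sq _ _ _).trans ?_
  refine mul_le_mul_of_nonneg_left ?_ (Finset.sum_nonneg fun _ _ => sq_nonneg _)
  calc ∑ y, (Kᵀ.mulVec a (f y)) ^ 2 ≤ ∑ _y : Fin n, ∑ z, (Kᵀ.mulVec a z) ^ 2 := by
        refine Finset.sum_le_sum fun y _ => ?_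
        exact Finset.single_le_sum (f := fun z => (Kᵀ.mulVec a z) ^ 2)
          (fun _ _ => sq_nonneg _) (Finset.mem_univ _)
    _ = _ := by simp

lemma const_bound {n : ℕ} {ι : Type*} [Fintype ι] (K : Matrix (Fin n) ι ℝ) (h : K.rank = n) :
    ∃ C : ℝ, ∀ a : Fin n → ℝ, ∑ x, a x ^ 2 ≤ C * ∑ y, (Kᵀ.mulVec a y) ^ 2 := by
  obtain ⟨f, hf⟩ := exists_minor K h
  have hd : 0 < (K.submatrix id f).det ^ 2 := by positivity
  refine ⟨(∑ x, ∑ y, ((K.submatrix id f).adjugate y x) ^ 2) * n / (K.submatrix id f).det ^ 2,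
    fun a => ?_⟩
  rw [div_mul_eq_mul_div, le_div_iff₀ hd]
  linarith [key_ineq K f a]

lemma eventual_bound {n m : ℕ} (D A : Matrix (Fin n) (Fin n) ℝ)
    (B : Matrix (Fin n) (Fin m) ℝ) (t₀ : ℝ) (h : (kalman (t₀ • D - A) B).rank = n)
    (k : ℕ) (hk : (n - 1) ^ 2 ≤ k) :
    ∃ C : ℝ, ∀ᶠ t : ℝ in Filter.atTop, ∀ a : Fin n → ℝ,
      ∑ x, a x ^ 2 ≤ C * (t ^ (2 * k) * ∑ y, ((kalman (t • D - A) B)ᵀ.mulVec a y) ^ 2) := by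
  obtain ⟨f, hf⟩ := exists_minor _ h
  set Q := (kalPoly D A B).submatrix id f with hQ
  have hev : ∀ t : ℝ, (kalman (t • D - A) B).submatrix id f =
      Q.map (Polynomial.evalRingHom t) := by
    intro t
    rw [← kalPoly_eval]
    rfl
  have hdet : ∀ t : ℝ, ((kalman (t • D - A) B).submatrix id f).det = Q.det.eval t := by
    intro t
    rw [hev]
    exact (RingHom.map_det (Polynomial.evalRingHom t) Q).symm
  have hadj : ∀ (t : ℝ) x y, ((kalman (t • D - A) B).submatrix id f).adjugate x y =
      (Q.adjugate x y).eval t := by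
    intro t x y
    rw [hev]
    exact (congrFun (congrFun (RingHom.map_adjugate (Polynomial.evalRingHom t) Q) x) y).symm
  have hQ0 : Q.det ≠ 0 := by
    intro h0
    rw [hdet, h0] at hf
    simp at hf
  set S : Polynomial ℝ := ∑ x, ∑ y, (Q.adjugate y x) ^ 2 with hS
  have hSdeg : S.natDegree ≤ 2 * k := by
    refine Polynomial.natDegree_sum_le_of_forall_le _ _ fun x _ => ?_
    refine Polynomial.natDegree_sum_le_of_forall_le _ _ fun y _ => ?_
    refine Polynomial.natDegree_pow_le.trans ?_
    have := natDegree_adjugate_le Q (d := n - 1) (fun i j => kalPoly_natDegree D A B i (f j)) y x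
    rw [← sq] at this
    omega
  have hdeg : S.degree ≤ (Polynomial.X ^ (2 * k) * Q.det ^ 2).degree := by
    refine (Polynomial.natDegree_le_iff_degree_le.mp hSdeg).trans ?_
    rw [Polynomial.degree_mul, Polynomial.degree_X_pow]
    have : (0 : WithBot ℕ) ≤ (Q.det ^ 2).degree :=
      Polynomial.zero_le_degree_iff.mpr (pow_ne_zero _ hQ0)
    exact le_add_of_nonneg_right this
  obtain ⟨C, hC⟩ := (Polynomial.isBigO_atTop_of_degree_le _ _ hdeg).bound
  refine ⟨C * n, ?_⟩
  filter_upwards [hC, Filter.eventually_ge_atTop (0 : ℝ),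
    Q.det.eventually_no_roots hQ0] with t ht ht0 hroot a
  have hd : 0 < (Q.det.eval t) ^ 2 := by
    have : Q.det.eval t ≠ 0 := hroot
    positivity
  have hk := key_ineq (kalman (t • D - A) B) f a
  simp only [hdet, hadj] at hk
  have hSe : S.eval t = ∑ x, ∑ y, ((Q.adjugate y x).eval t) ^ 2 := by
    simp [hS, Polynomial.eval_finset_sum]
  rw [← hSe] at hk
  have h1 : S.eval t ≤ C * (t ^ (2 * k) * (Q.det.eval t) ^ 2) := by
    have h2 : 0 ≤ t ^ (2 * k) * (Q.det.eval t) ^ 2 := by positivity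
    simp only [Polynomial.eval_mul, Polynomial.eval_pow, Polynomial.eval_X, Real.norm_eq_abs] at ht
    rw [abs_of_nonneg h2] at ht
    exact (le_abs_self _).trans ht
  set W := ∑ y, ((kalman (t • D - A) B)ᵀ.mulVec a y) ^ 2 with hW
  have hW0 : 0 ≤ (n : ℝ) * W := mul_nonneg (by positivity)
    (Finset.sum_nonneg fun _ _ => sq_nonneg _)
  have h3 := hk.trans (mul_le_mul_of_nonneg_right h1 hW0)
  refine le_of_mul_le_mul_left (h3.trans (le_of_eq ?_)) hd
  ring

theorem stmt11 {n m : ℕ} (hn : 1 ≤ n) (hm : 1 ≤ m)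
    (D A : Matrix (Fin n) (Fin n) ℝ) (B : Matrix (Fin n) (Fin m) ℝ)
    (lam : ℕ → ℝ) (hpos : ∀ i, 0 < lam i) (hmono : StrictMono lam)
    (htend : Filter.Tendsto lam Filter.atTop Filter.atTop)
    (k : ℕ) (hk : (n - 1) ^ 2 ≤ k) :
    (∀ i, (kalman (lam i • D - A) B).rank = n) ↔
      (∃ R > (0 : ℝ), ∀ a : ℕ → Fin n → ℝ, (Function.support a).Finite →
        ∑' i, ∑ x, (a i x) ^ 2 ≤
          R * ∑' i, lam i ^ (2 * k) *
            ∑ y, ((kalman (lam i • D - A) B)ᵀ.mulVec (a i) y) ^ 2) := by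
  constructor
  · intro h
    have hnn : ∀ i (v : Fin n → ℝ), 0 ≤ lam i ^ (2 * k) *
        ∑ y, ((kalman (lam i • D - A) B)ᵀ.mulVec v y) ^ 2 := fun i v =>
      mul_nonneg (pow_nonneg (hpos i).le _) (Finset.sum_nonneg fun _ _ => sq_nonneg _)
    have hunif : ∃ R > (0 : ℝ), ∀ i (v : Fin n → ℝ), ∑ x, v x ^ 2 ≤ R * (lam i ^ (2 * k) *
        ∑ y, ((kalman (lam i • D - A) B)ᵀ.mulVec v y) ^ 2) := by
      obtain ⟨C, hC⟩ := eventual_bound D A B (lam 0) (h 0) k hk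
      obtain ⟨N, hN⟩ := Filter.eventually_atTop.mp (htend.eventually hC)
      choose c hc using fun i => const_bound _ (h i)
      refine ⟨|C| + ∑ i ∈ Finset.range N, |c i / lam i ^ (2 * k)| + 1, ?_, ?_⟩
      · have : 0 ≤ ∑ i ∈ Finset.range N, |c i / lam i ^ (2 * k)| :=
          Finset.sum_nonneg fun _ _ => abs_nonneg _
        positivity
      · intro i v
        have hs : 0 ≤ ∑ i ∈ Finset.range N, |c i / lam i ^ (2 * k)| :=
          Finset.sum_nonneg fun _ _ => abs_nonneg _
        rcases le_or_gt N i with hi | hi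
        · refine (hN i hi v).trans (mul_le_mul_of_nonneg_right ?_ (hnn i v))
          linarith [le_abs_self C]
        · have h1 : c i / lam i ^ (2 * k) ≤ ∑ i ∈ Finset.range N, |c i / lam i ^ (2 * k)| :=
            (le_abs_self _).trans (Finset.single_le_sum
              (f := fun i => |c i / lam i ^ (2 * k)|) (fun _ _ => abs_nonneg _)
              (Finset.mem_range.mpr hi))
          have hp : lam i ^ (2 * k) ≠ 0 := (pow_pos (hpos i) _).ne'
          calc ∑ x, v x ^ 2 ≤ _ := hc i v
            _ = c i / lam i ^ (2 * k) * (lam i ^ (2 * k) *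
                ∑ y, ((kalman (lam i • D - A) B)ᵀ.mulVec v y) ^ 2) := by
              rw [← mul_assoc, div_mul_cancel₀ _ hp]
            _ ≤ _ := mul_le_mul_of_nonneg_right (by linarith [abs_nonneg C]) (hnn i v)
    obtain ⟨R, hR, hb⟩ := hunif
    refine ⟨R, hR, fun a ha => ?_⟩
    have hz : ∀ i ∉ ha.toFinset, a i = 0 := by
      intro i hi
      simpa using hi
    rw [tsum_eq_sum (s := ha.toFinset) (fun i hi => by simp [hz i hi]),
      tsum_eq_sum (s := ha.toFinset) (fun i hi => by simp [hz i hi]), Finset.mul_sum]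
    exact Finset.sum_le_sum fun i _ => hb i (a i)
  · rintro ⟨R, hR, hb⟩ i
    have hinj : Function.Injective (kalman (lam i • D - A) B)ᵀ.mulVec := by
      rw [← Matrix.coe_mulVecLin, ← LinearMap.ker_eq_bot, LinearMap.ker_eq_bot']
      intro v hv
      rw [Matrix.mulVecLin_apply] at hv
      have h := hb (Pi.single i v) ((Set.finite_singleton i).subset
        (Function.support_subset_iff'.mpr fun j hj => by
          simp only [Set.mem_singleton_iff] at hj
          simp [Pi.single_apply, hj]))
      rw [tsum_eq_single i (fun j hj => by simp [Pi.single_eq_of_ne hj]),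
        tsum_eq_single i (fun j hj => by simp [Pi.single_eq_of_ne hj])] at h
      simp only [Pi.single_eq_same, hv] at h
      simp only [Pi.zero_apply, ne_eq, OfNat.ofNat_ne_zero, not_false_eq_true, zero_pow,
        Finset.sum_const_zero, mul_zero] at h
      have h0 := (Finset.sum_eq_zero_iff_of_nonneg (fun x _ => sq_nonneg (v x))).mp
        (le_antisymm h (Finset.sum_nonneg fun _ _ => sq_nonneg _))
      funext x
      exact pow_eq_zero_iff two_ne_zero |>.mp (h0 x (Finset.mem_univ x))
    rw [Matrix.mulVec_injective_iff] at hinj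
    have := LinearIndependent.rank_matrix (M := kalman (lam i • D - A) B) hinj
    simpa using this
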